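/- For every N ≥ 2 there is a constant C_N depending only on N such that: if F(X) = Σ_{i,j=1}^N f_{ij} X_i X_j is a nonsingular integral quadratic form in N variables (det(f_{ij}) ≠ 0) and Λ ⊆ ℤ^N is a full-rank sublattice containing a nonzero point x with F(x) = 0, then there exist linearly independent x, y ∈ Λ with F(x) = F(y) = 0 and |x| · |y| ≤ C_N · |F|^{N−1} · det(Λ)^2. -/

import Mathlib

/-- The sup-norm of an integer vector: `max_i |x_i|`. -/
def supNorm {N : ℕ} (x : Fin N → ℤ) : ℕ := Finset.univ.sup fun i => (x i).natAbs

/-- Membership in the full-rank sublattice of `ℤ^N` whose ℤ-basis consists of the rows of the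
nonsingular integer matrix `B`. -/
def memLattice {N : ℕ} (B : Matrix (Fin N) (Fin N) ℤ) (x : Fin N → ℤ) : Prop :=
  ∃ c : Fin N → ℤ, ∀ j, x j = ∑ i, c i * B i j

/-!
Let `x` be a shortest nonzero zero of `Q` in the lattice `Λ`. It is primitive, so it extends to a
basis `x, d₁, …, dₙ` of `Λ`. Eliminating the coordinate `k` at which `x` is largest replaces each
`d` by `w = x k • d - d k • x`; after reducing these projections, `‖x‖ ∏ ‖wⱼ‖ ≪ ‖x‖ⁿ det Λ`.

The reflection of `x` in `d`, multiplied by `Q d`, is the zero `z = Q d • x - polar Q x d • d`.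
Replacing `d` by `w` only multiplies `z` by `(x k)²`, since `Q x = 0`, and therefore
`‖x‖ ‖z‖ ≤ K ‖w‖²` with `K ≪ |Q|`. By minimality `‖x‖² ≤ K ‖wⱼ‖²` for every `j`. Nondegeneracy
provides an `i` with `polar Q x dᵢ ≠ 0`, so that `zᵢ` is independent of `x`; multiplying the bound
for `‖x‖ ‖zᵢ‖` with the lower bounds for the other `‖wⱼ‖` gives `‖x‖ ‖zᵢ‖ ≤ Kⁿ (c det Λ)²`.
-/

open Matrix

section Norm

variable {ι E : Type*} [Fintype ι]

theorem exists_norm_apply_eq_pi_norm [SeminormedAddCommGroup E] [Nonempty ι] (x : ι → E) :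
    ∃ k, ‖x k‖ = ‖x‖ := by
  obtain ⟨k, hk⟩ := Finite.exists_max fun i => ‖x i‖
  exact ⟨k, (norm_le_pi_norm x k).antisymm ((pi_norm_le_iff_of_nonempty x).2 hk)⟩

theorem exists_mem_forall_norm_le [SeminormedAddCommGroup E] [ProperSpace E] [DiscreteTopology E]
    {S : Set E} (hS : S.Nonempty) : ∃ x ∈ S, ∀ y ∈ S, ‖x‖ ≤ ‖y‖ := by
  obtain ⟨x, hx, hdist⟩ := (isClosed_discrete S).exists_infDist_eq_dist hS 0
  refine ⟨x, hx, fun y hy => ?_⟩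
  simpa [hdist] using Metric.infDist_le_dist_of_mem (x := 0) hy

theorem one_le_norm_of_int_ne_zero {g : ℤ} (hg : g ≠ 0) : 1 ≤ ‖g‖ := by
  rw [Int.norm_eq_abs]
  exact_mod_cast Int.one_le_abs hg

theorem one_le_norm_of_int_vec_ne_zero {x : ι → ℤ} (hx : x ≠ 0) : 1 ≤ ‖x‖ := by
  obtain ⟨i, hi⟩ := Function.ne_iff.1 hx
  exact (one_le_norm_of_int_ne_zero hi).trans (norm_le_pi_norm x i)

theorem norm_removeNth_of_apply_eq_zero [SeminormedAddCommGroup E] {n : ℕ} {k : Fin (n + 1)}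
    {x : Fin (n + 1) → E} (hx : x k = 0) : ‖k.removeNth x‖ = ‖x‖ := by
  refine le_antisymm ?_ ?_ <;> refine (pi_norm_le_iff_of_nonneg (norm_nonneg _)).2 fun j => ?_
  · exact norm_le_pi_norm x (k.succAbove j)
  · obtain rfl | ⟨j, rfl⟩ := k.eq_self_or_eq_succAbove j
    · simp [hx]
    · exact norm_le_pi_norm (k.removeNth x) j

theorem natCast_sup_natAbs (x : ι → ℤ) :
    ((Finset.univ.sup fun i => (x i).natAbs : ℕ) : ℝ) = ‖x‖ := by
  have hcast : ((Finset.univ.sup fun i => (x i).natAbs : ℕ) : NNReal) =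
      Finset.univ.sup fun i => ((x i).natAbs : NNReal) :=
    Finset.apply_sup_eq_sup_comp_of_linearOrder _ Nat.mono_cast Nat.cast_zero
  simp only [NNReal.natCast_natAbs] at hcast
  rw [Pi.norm_def, ← hcast, NNReal.coe_natCast]

end Norm

section Rows

variable {R ι : Type*} [CommRing R] [IsDomain R] [Fintype ι] [DecidableEq ι] {A : Matrix ι ι R}

theorem row_ne_zero_of_det_ne_zero (hA : A.det ≠ 0) (i : ι) : A i ≠ 0 :=
  (linearIndependent_rows_of_det_ne_zero hA).ne_zero i

theorem linearIndependent_pair_rows_of_det_ne_zero (hA : A.det ≠ 0) {i j : ι} (hij : i ≠ j) :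
    LinearIndependent R ![A i, A j] := by
  convert (linearIndependent_rows_of_det_ne_zero hA).comp ![i, j] (injective_pair_iff_ne.2 hij)
    using 1
  exact FinVec.map_eq A ![i, j]

theorem linearMap_eq_zero_of_forall_row_eq_zero (hA : A.det ≠ 0) {φ : (ι → R) →ₗ[R] R}
    (hφ : ∀ i, φ (A i) = 0) : φ = 0 := by
  have hcoords : A *ᵥ (fun j => φ (Pi.single j 1)) = 0 := by
    ext i
    rw [Pi.zero_apply, ← hφ i, pi_eq_sum_univ' (A i)]
    simp [mulVec, dotProduct]
  have hφ_single := eq_zero_of_mulVec_eq_zero hA hcoords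
  exact LinearMap.pi_ext' fun j => LinearMap.ext_ring (congrFun hφ_single j)

end Rows

section Unimodular

theorem exists_basis_apply_zero_eq {R M : Type*} [CommRing R] [IsDomain R] [IsPrincipalIdealRing R]
    [AddCommGroup M] [Module R M] {n : ℕ} (b₀ : Module.Basis (Fin (n + 1)) R M) {x : M}
    {φ : M →ₗ[R] R} (hφ : φ x = 1) : ∃ b : Module.Basis (Fin (n + 1)) R M, b 0 = x := by
  obtain ⟨m, b⟩ := (LinearMap.ker φ).basisOfPid b₀
  let b' := Module.Basis.mkFinCons x b
    (fun c y hy hcy => by simpa [hφ, LinearMap.mem_ker.1 hy] using congrArg φ hcy)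
    (fun z => ⟨-φ z, by simp [hφ]⟩)
  obtain rfl : m = n := by
    simpa using (Module.finrank_eq_card_basis b').symm.trans (Module.finrank_eq_card_basis b₀)
  exact ⟨b', by simp [b']⟩

theorem exists_isUnit_det_row_zero_eq {R : Type*} [CommRing R] [IsDomain R]
    [IsPrincipalIdealRing R] [NormalizedGCDMonoid R] {n : ℕ} {c : Fin (n + 1) → R}
    (hc : Finset.univ.gcd c = 1) :
    ∃ U : Matrix (Fin (n + 1)) (Fin (n + 1)) R, IsUnit U.det ∧ U 0 = c := by
  obtain ⟨a, ha⟩ := Finset.univ.gcd_eq_sum_mul c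
  have hφ : Fintype.linearCombination R a c = 1 := by
    simpa [Fintype.linearCombination_apply, hc] using ha.symm
  obtain ⟨b, hb⟩ := exists_basis_apply_zero_eq (Pi.basisFun R (Fin (n + 1))) hφ
  refine ⟨of b, ?_, hb⟩
  exact Pi.basisFun_det_apply (R := R) b ▸ (Pi.basisFun R (Fin (n + 1))).isUnit_det b

theorem norm_det_mul_of_isUnit_det {ι : Type*} [Fintype ι] [DecidableEq ι] {U : Matrix ι ι ℤ}
    (hU : IsUnit U.det) (A : Matrix ι ι ℤ) : ‖(U * A).det‖ = ‖A.det‖ := by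
  rcases Int.isUnit_iff.1 hU with h | h <;> simp [h]

/-- The lattice spanned by the rows of an integer matrix. -/
def rowLattice {ι m : Type*} [Fintype m] (B : Matrix m ι ℤ) : Submodule ℤ (ι → ℤ) :=
  LinearMap.range B.vecMulLinear

theorem row_mem_rowLattice {ι m : Type*} [Fintype m] (B : Matrix m ι ℤ) (i : m) :
    B i ∈ rowLattice B := by
  classical exact ⟨Pi.single i 1, single_one_vecMul i B⟩

theorem mul_row_mem_rowLattice {ι l m : Type*} [Fintype m] (U : Matrix l m ℤ) (B : Matrix m ι ℤ)
    (i : l) : (U * B) i ∈ rowLattice B :=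
  ⟨U i, rfl⟩

-- Dividing a shortest vector by the gcd `g` of its coordinates in the basis cannot shorten it, so
-- `g` may be assumed to be `1` and the vector extends to a basis.
theorem exists_isUnit_det_row_zero_mem_forall_norm_le {ι : Type*} [Fintype ι] {n : ℕ}
    {B : Matrix (Fin (n + 1)) ι ℤ} {S : Set (ι → ℤ)} (h0 : 0 ∉ S)
    (hdiv : ∀ (g : ℤ) (v : ι → ℤ), g • v ∈ S → v ∈ S) (hS : ∃ v ∈ rowLattice B, v ∈ S) :
    ∃ U : Matrix (Fin (n + 1)) (Fin (n + 1)) ℤ, IsUnit U.det ∧ (U * B) 0 ∈ S ∧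
      ∀ v ∈ rowLattice B, v ∈ S → ‖(U * B) 0‖ ≤ ‖v‖ := by
  obtain ⟨_, ⟨⟨c, rfl⟩, hx⟩, hmin⟩ :=
    exists_mem_forall_norm_le (S := {v | v ∈ rowLattice B ∧ v ∈ S}) hS
  obtain ⟨c', hc', hgcd⟩ := Finset.univ.extract_gcd c Finset.univ_nonempty
  have hcB : c ᵥ* B = Finset.univ.gcd c • (c' ᵥ* B) := by
    rw [← smul_vecMul]
    exact congrArg (· ᵥ* B) (funext fun i => hc' i (Finset.mem_univ i))
  rw [vecMulLinear_apply, hcB] at hx hmin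
  have hgcd0 : Finset.univ.gcd c ≠ 0 := fun h => h0 (by simpa [h] using hx)
  obtain ⟨U, hU, hU0⟩ := exists_isUnit_det_row_zero_eq hgcd
  refine ⟨U, hU, ?_, fun v hv hvS => ?_⟩ <;> rw [mul_apply_eq_vecMul, hU0]
  · exact hdiv _ _ hx
  calc ‖c' ᵥ* B‖ ≤ ‖Finset.univ.gcd c‖ * ‖c' ᵥ* B‖ :=
        le_mul_of_one_le_left (norm_nonneg _) (one_le_norm_of_int_ne_zero hgcd0)
    _ = ‖Finset.univ.gcd c • (c' ᵥ* B)‖ := (norm_smul _ _).symm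
    _ ≤ ‖v‖ := hmin v ⟨hv, hvS⟩

end Unimodular

section Condensation

variable {R : Type*} [CommRing R]

/-- Elimination of the `k`-th coordinate by means of the pivot vector `x`, cleared of denominators:
up to the factor `x k` this is the projection along `x` onto the hyperplane `d k = 0`. -/
def pivotElim {ι : Type*} (k : ι) (x : ι → R) : (ι → R) →ₗ[R] ι → R :=
  x k • LinearMap.id - (LinearMap.proj k).smulRight x

theorem pivotElim_apply {ι : Type*} (k : ι) (x d : ι → R) :
    pivotElim k x d = x k • d - d k • x := rfl

theorem pivotElim_self {ι : Type*} (k : ι) (x : ι → R) : pivotElim k x x = 0 :=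
  sub_self _

theorem pivotElim_apply_pivot {ι : Type*} (k : ι) (x d : ι → R) : pivotElim k x d k = 0 := by
  simp [pivotElim_apply, mul_comm]

variable {n : ℕ}

/-- Chio's condensation of a square matrix with respect to the pivot entry `A 0 k`: the `k`-th
column is eliminated from the rows below the first one, and row `0` and column `k` are removed. -/
def condensation (k : Fin (n + 1)) (A : Matrix (Fin (n + 1)) (Fin (n + 1)) R) :
    Matrix (Fin n) (Fin n) R :=
  of fun i => k.removeNth (pivotElim k (A 0) (A i.succ))

theorem pivot_mul_det_condensation (k : Fin (n + 1)) (A : Matrix (Fin (n + 1)) (Fin (n + 1)) R) :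
    (-1) ^ (k : ℕ) * A 0 k * (condensation k A).det = A 0 k ^ n * A.det := by
  let Q : Matrix (Fin (n + 1)) (Fin (n + 1)) R :=
    of (Fin.cons (A 0) fun i => pivotElim k (A 0) (A i.succ))
  have hQ_expand : Q.det = (-1) ^ (k : ℕ) * A 0 k * (condensation k A).det := by
    rw [det_succ_column Q k, Fin.sum_univ_succ]
    simp only [Q, of_apply, Fin.cons_zero, Fin.cons_succ, pivotElim_apply_pivot]
    simp only [Fin.val_zero, zero_add, mul_zero, zero_mul, Finset.sum_const_zero, add_zero]
    rfl
  have hQ_rows : Q.det = A 0 k ^ n * A.det := by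
    let scale : Fin (n + 1) → R := Fin.cons 1 fun _ => A 0 k
    rw [det_eq_of_forall_row_eq_smul_add_const (B := of fun i j => scale i * A i j)
      (Fin.cons 0 fun i => -A i.succ k) 0 rfl, det_mul_column]
    · simp [scale, Fin.prod_univ_succ]
    · refine fun i => Fin.cases (by simp [Q, scale]) (fun i j => ?_) i
      simp [Q, scale, pivotElim_apply, sub_eq_add_neg]
  rw [← hQ_expand, hQ_rows]

/-- The block matrix `!![1, 0; m, V]`: it fixes the first row of a matrix, lets `V` act on the
remaining rows and adds multiples of the first row to them. -/
def borderedMatrix (m : Fin n → R) (V : Matrix (Fin n) (Fin n) R) :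
    Matrix (Fin (n + 1)) (Fin (n + 1)) R :=
  of (Fin.cons (Fin.cons 1 0) fun i => Fin.cons (m i) (V i))

variable (m : Fin n → R) (V : Matrix (Fin n) (Fin n) R)

theorem det_borderedMatrix : (borderedMatrix m V).det = V.det := by
  have hminor : (borderedMatrix m V).submatrix Fin.succ (Fin.succAbove 0) = V := by
    ext i j
    simp [borderedMatrix]
  rw [det_succ_row_zero, Fin.sum_univ_succ, hminor]
  simp [borderedMatrix]

theorem borderedMatrix_mul_zero {ι : Type*} (A : Matrix (Fin (n + 1)) ι R) :
    (borderedMatrix m V * A) 0 = A 0 := by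
  ext j
  simp [mul_apply, Fin.sum_univ_succ, borderedMatrix]

theorem borderedMatrix_mul_succ {ι : Type*} (A : Matrix (Fin (n + 1)) ι R) (i : Fin n) :
    (borderedMatrix m V * A) i.succ = m i • A 0 + ∑ l, V i l • A l.succ := by
  ext j
  simp [mul_apply, Fin.sum_univ_succ, borderedMatrix]

theorem condensation_borderedMatrix_mul (k : Fin (n + 1))
    (A : Matrix (Fin (n + 1)) (Fin (n + 1)) R) :
    condensation k (borderedMatrix m V * A) = V * condensation k A := by
  ext i j
  simp only [condensation, borderedMatrix_mul_zero, borderedMatrix_mul_succ, map_add, map_smul,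
    map_sum, pivotElim_self, smul_zero, zero_add, of_apply, mul_apply, Fin.removeNth,
    Finset.sum_apply, Pi.smul_apply, smul_eq_mul]

theorem det_condensation_ne_zero [IsDomain R] {k : Fin (n + 1)}
    {A : Matrix (Fin (n + 1)) (Fin (n + 1)) R} (hA : A.det ≠ 0) (hk : A 0 k ≠ 0) :
    (condensation k A).det ≠ 0 := by
  refine fun h => mul_ne_zero (pow_ne_zero n hk) hA ?_
  rw [← pivot_mul_det_condensation, h, mul_zero]

theorem norm_condensation_row {S : Type*} [NormedCommRing S] (k : Fin (n + 1))
    (A : Matrix (Fin (n + 1)) (Fin (n + 1)) S) (i : Fin n) :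
    ‖condensation k A i‖ = ‖pivotElim k (A 0) (A i.succ)‖ :=
  norm_removeNth_of_apply_eq_zero (pivotElim_apply_pivot k (A 0) (A i.succ))

theorem norm_pivot_mul_norm_det_condensation {S : Type*} [NormedCommRing S] [NormMulClass S]
    [NormOneClass S] (k : Fin (n + 1)) (A : Matrix (Fin (n + 1)) (Fin (n + 1)) S) :
    ‖A 0 k‖ * ‖(condensation k A).det‖ = ‖A 0 k‖ ^ n * ‖A.det‖ := by
  simpa using congrArg norm (pivot_mul_det_condensation k A)

end Condensation

section Reduction

variable {n : ℕ}

theorem exists_two_mul_norm_mul_add_le {p : ℤ} (hp : p ≠ 0) (s : ℤ) :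
    ∃ m : ℤ, 2 * ‖m * p + s‖ ≤ ‖p‖ := by
  have hp' : (p : ℝ) ≠ 0 := Int.cast_ne_zero.2 hp
  refine ⟨-round (s / p : ℝ), ?_⟩
  have hround : ‖-round (s / p : ℝ) * p + s‖ = |(s / p : ℝ) - round (s / p : ℝ)| * ‖p‖ := by
    rw [Int.norm_eq_abs, Int.norm_eq_abs, ← abs_mul, sub_mul, div_mul_cancel₀ _ hp']
    push_cast
    ring_nf
  rw [hround]
  nlinarith [abs_sub_round (s / p : ℝ), norm_nonneg p]

/-- The row lattice of `B` has a basis, given by the rows of `U * B`, for which the product of the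
sup-norms is at most `2 ^ (n.choose 2)` times the covolume. -/
def HasShortBasis (B : Matrix (Fin n) (Fin n) ℤ) : Prop :=
  ∃ U : Matrix (Fin n) (Fin n) ℤ, IsUnit U.det ∧
    ∏ i, ‖(U * B) i‖ ≤ 2 ^ n.choose 2 * ‖B.det‖

/-- The rows of `A` form a basis reduced relative to its first vector: the pivot `A 0 k` is a
largest entry of that vector, the `k`-th coordinates of the other vectors are at most half of it,
and the images of the other vectors under elimination of the `k`-th coordinate are a short basis of
the projected lattice. -/
structure IsPivotReduced (k : Fin (n + 1)) (A : Matrix (Fin (n + 1)) (Fin (n + 1)) ℤ) : Prop where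
  norm_pivot : ‖A 0 k‖ = ‖A 0‖
  two_mul_norm_le : ∀ i : Fin n, 2 * ‖A i.succ k‖ ≤ ‖A 0‖
  norm_mul_prod_le : ‖A 0‖ * ∏ i : Fin n, ‖pivotElim k (A 0) (A i.succ)‖ ≤
    2 ^ n.choose 2 * (‖A 0‖ ^ n * ‖A.det‖)

theorem exists_isPivotReduced_mul
    (hred : ∀ P : Matrix (Fin n) (Fin n) ℤ, P.det ≠ 0 → HasShortBasis P)
    {A : Matrix (Fin (n + 1)) (Fin (n + 1)) ℤ} (hA : A.det ≠ 0) :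
    ∃ (U : Matrix (Fin (n + 1)) (Fin (n + 1)) ℤ) (k : Fin (n + 1)),
      IsUnit U.det ∧ (U * A) 0 = A 0 ∧ IsPivotReduced k (U * A) := by
  obtain ⟨k, hk⟩ := exists_norm_apply_eq_pi_norm (A 0)
  have hk0 : A 0 k ≠ 0 := norm_pos_iff.1 <|
    hk.symm ▸ norm_pos_iff.2 (row_ne_zero_of_det_ne_zero hA 0)
  obtain ⟨V, hV, hprod⟩ := hred _ (det_condensation_ne_zero hA hk0)
  choose m hm using fun i => exists_two_mul_norm_mul_add_le hk0 (∑ l, V i l * A l.succ k)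
  have hU : IsUnit (borderedMatrix m V).det := by rwa [det_borderedMatrix]
  refine ⟨borderedMatrix m V, k, hU, borderedMatrix_mul_zero m V A, ?_, fun i => ?_, ?_⟩
  · rw [borderedMatrix_mul_zero, hk]
  · simpa [borderedMatrix_mul_zero, borderedMatrix_mul_succ, ← hk] using hm i
  · simp_rw [← norm_condensation_row, condensation_borderedMatrix_mul, borderedMatrix_mul_zero,
      norm_det_mul_of_isUnit_det hU, ← hk, ← norm_pivot_mul_norm_det_condensation]
    rw [mul_left_comm]
    gcongr

theorem IsPivotReduced.norm_mul_norm_le_two_mul_norm_pivotElim {k : Fin (n + 1)}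
    {A : Matrix (Fin (n + 1)) (Fin (n + 1)) ℤ} (hA : IsPivotReduced k A) {i : Fin n}
    (hi : ‖A 0‖ ≤ ‖A i.succ‖) :
    ‖A 0‖ * ‖A i.succ‖ ≤ 2 * ‖pivotElim k (A 0) (A i.succ)‖ := by
  have htriangle : ‖A 0‖ * ‖A i.succ‖ ≤
      ‖pivotElim k (A 0) (A i.succ)‖ + ‖A i.succ k‖ * ‖A 0‖ := by
    calc ‖A 0‖ * ‖A i.succ‖ = ‖A 0 k • A i.succ‖ := by rw [norm_smul, hA.norm_pivot]
      _ ≤ ‖A 0 k • A i.succ - A i.succ k • A 0‖ + ‖A i.succ k • A 0‖ := norm_le_norm_sub_add _ _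
      _ = ‖pivotElim k (A 0) (A i.succ)‖ + ‖A i.succ k‖ * ‖A 0‖ := by
        rw [norm_smul, pivotElim_apply]
  nlinarith [hA.two_mul_norm_le i, norm_nonneg (A 0)]

theorem exists_isPivotReduced_forall_norm_le
    (hred : ∀ P : Matrix (Fin n) (Fin n) ℤ, P.det ≠ 0 → HasShortBasis P)
    {B : Matrix (Fin (n + 1)) (Fin (n + 1)) ℤ} (hB : B.det ≠ 0) {S : Set (Fin (n + 1) → ℤ)}
    (h0 : 0 ∉ S) (hdiv : ∀ (g : ℤ) (v : Fin (n + 1) → ℤ), g • v ∈ S → v ∈ S)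
    (hS : ∃ v ∈ rowLattice B, v ∈ S) :
    ∃ (U : Matrix (Fin (n + 1)) (Fin (n + 1)) ℤ) (k : Fin (n + 1)), IsUnit U.det ∧
      IsPivotReduced k (U * B) ∧ (U * B) 0 ∈ S ∧
      ∀ v ∈ rowLattice B, v ∈ S → ‖(U * B) 0‖ ≤ ‖v‖ := by
  obtain ⟨U, hU, hmem, hmin⟩ := exists_isUnit_det_row_zero_mem_forall_norm_le h0 hdiv hS
  have hUB : (U * B).det ≠ 0 := by simpa [hU.ne_zero] using hB
  obtain ⟨U', k, hU', hrow, hUk⟩ := exists_isPivotReduced_mul hred hUB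
  rw [← Matrix.mul_assoc] at hrow hUk
  refine ⟨U' * U, k, ?_, hUk, ?_⟩
  · rw [det_mul]
    exact hU'.mul hU
  · rw [hrow]
    exact ⟨hmem, hmin⟩

theorem IsPivotReduced.prod_norm_le {k : Fin (n + 1)} {A : Matrix (Fin (n + 1)) (Fin (n + 1)) ℤ}
    (hA : IsPivotReduced k A) (h0 : A 0 ≠ 0) (hmin : ∀ i : Fin n, ‖A 0‖ ≤ ‖A i.succ‖) :
    ∏ i, ‖A i‖ ≤ 2 ^ (n + 1).choose 2 * ‖A.det‖ := by
  have hx : 0 < ‖A 0‖ := norm_pos_iff.2 h0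
  refine le_of_mul_le_mul_left ?_ (pow_pos hx n)
  calc ‖A 0‖ ^ n * ∏ i, ‖A i‖ = ‖A 0‖ * ∏ i : Fin n, (‖A 0‖ * ‖A i.succ‖) := by
        rw [Fin.prod_univ_succ, Finset.prod_mul_distrib, Finset.prod_const, Finset.card_fin]
        ring
    _ ≤ ‖A 0‖ * ∏ i : Fin n, (2 * ‖pivotElim k (A 0) (A i.succ)‖) := by
        gcongr ‖A 0‖ * ∏ i, ?_ with i
        exact hA.norm_mul_norm_le_two_mul_norm_pivotElim (hmin i)
    _ = 2 ^ n * (‖A 0‖ * ∏ i : Fin n, ‖pivotElim k (A 0) (A i.succ)‖) := by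
        rw [Finset.prod_mul_distrib, Finset.prod_const, Finset.card_fin]
        ring
    _ ≤ 2 ^ n * (2 ^ n.choose 2 * (‖A 0‖ ^ n * ‖A.det‖)) := by
        gcongr 2 ^ n * ?_
        exact hA.norm_mul_prod_le
    _ = ‖A 0‖ ^ n * (2 ^ (n + 1).choose 2 * ‖A.det‖) := by
        rw [Nat.choose_succ_succ' n 1, Nat.choose_one_right]
        ring

theorem hasShortBasis_of_det_ne_zero {B : Matrix (Fin n) (Fin n) ℤ} (hB : B.det ≠ 0) :
    HasShortBasis B := by
  induction n with
  | zero => exact ⟨1, by simp, by simp⟩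
  | succ n ih =>
    obtain ⟨U, k, hU, hUk, hmem, hmin⟩ := exists_isPivotReduced_forall_norm_le (fun _ => ih) hB
      (S := {v | v ≠ 0}) (by simp) (fun g v hgv hv => hgv (by simp [hv]))
      ⟨B 0, row_mem_rowLattice B 0, row_ne_zero_of_det_ne_zero hB 0⟩
    have hUB : (U * B).det ≠ 0 := by simpa [hU.ne_zero] using hB
    refine ⟨U, hU, (hUk.prod_norm_le hmem fun i => ?_).trans_eq ?_⟩
    · exact hmin _ (mul_row_mem_rowLattice U B i.succ) (row_ne_zero_of_det_ne_zero hUB i.succ)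
    · rw [norm_det_mul_of_isUnit_det hU]

end Reduction

section Reflection

open QuadraticMap (polar)

variable {R M : Type*} [CommRing R] [AddCommGroup M] [Module R M]

/-- `Q d` times the reflection of `x` in the hyperplane orthogonal to `d`; without the
denominator `Q d` it makes sense for every `d`, isotropic or not. -/
def scaledReflection (Q : QuadraticForm R M) (d x : M) : M :=
  Q d • x - polar Q x d • d

theorem map_scaledReflection (Q : QuadraticForm R M) (d x : M) :
    Q (scaledReflection Q d x) = Q d ^ 2 * Q x := by
  rw [scaledReflection, sub_eq_add_neg, QuadraticMap.map_add Q, QuadraticMap.map_neg,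
    QuadraticMap.map_smul, QuadraticMap.map_smul, QuadraticMap.polar_neg_right,
    QuadraticMap.polar_smul_left, QuadraticMap.polar_smul_right]
  simp only [smul_eq_mul]
  ring

theorem scaledReflection_mem (Q : QuadraticForm R M) {Λ : Submodule R M} {d x : M} (hd : d ∈ Λ)
    (hx : x ∈ Λ) : scaledReflection Q d x ∈ Λ :=
  sub_mem (Λ.smul_mem _ hx) (Λ.smul_mem _ hd)

theorem scaledReflection_smul_sub_smul {Q : QuadraticForm R M} {x : M} (hx : Q x = 0) (d : M)
    (p s : R) : scaledReflection Q (p • d - s • x) x = p ^ 2 • scaledReflection Q d x := by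
  have hpolar : polar Q x (p • d - s • x) = p * polar Q x d := by
    simp [QuadraticMap.polar_sub_right, QuadraticMap.polar_smul_right, QuadraticMap.polar_self, hx]
  have hmap : Q (p • d - s • x) = p ^ 2 * Q d - p * s * polar Q x d := by
    rw [sub_eq_add_neg, QuadraticMap.map_add Q, QuadraticMap.map_neg, QuadraticMap.map_smul,
      QuadraticMap.map_smul, QuadraticMap.polar_neg_right, QuadraticMap.polar_smul_left,
      QuadraticMap.polar_smul_right, QuadraticMap.polar_comm, hx]
    simp only [smul_eq_mul]
    ring
  rw [scaledReflection, scaledReflection, hpolar, hmap]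
  module

theorem linearIndependent_pair_scaledReflection [IsDomain R] {Q : QuadraticForm R M} {d x : M}
    (hxd : LinearIndependent R ![x, d]) (hpolar : polar Q x d ≠ 0) :
    LinearIndependent R ![x, scaledReflection Q d x] := by
  rw [LinearIndependent.pair_iff] at hxd ⊢
  intro s t hst
  obtain ⟨hs, ht⟩ := hxd (s + t * Q d) (-(t * polar Q x d)) (by
    rw [← hst, scaledReflection]
    module)
  obtain rfl : t = 0 := by simpa [hpolar] using ht
  simpa using hs

theorem map_eq_zero_of_scaledReflection_eq_zero {Q : QuadraticForm R M} {d x : M}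
    (hxd : LinearIndependent R ![x, d]) (h : scaledReflection Q d x = 0) : Q d = 0 :=
  (LinearIndependent.pair_iff.1 hxd (Q d) (-polar Q x d) (by
    rw [← h, scaledReflection]
    module)).1

theorem norm_toLinearMap₂'_le {S ι : Type*} [NormedCommRing S] [Fintype ι] [DecidableEq ι]
    {f : Matrix ι ι S} {H : ℝ} (hH : ∀ i j, ‖f i j‖ ≤ H) (u v : ι → S) :
    ‖toLinearMap₂' S f u v‖ ≤ Fintype.card ι ^ 2 * H * ‖u‖ * ‖v‖ := by
  have hterm (i j : ι) : ‖u i * f i j * v j‖ ≤ H * ‖u‖ * ‖v‖ := by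
    have hH0 : 0 ≤ H := (norm_nonneg _).trans (hH i j)
    calc ‖u i * f i j * v j‖ ≤ ‖u i‖ * ‖f i j‖ * ‖v j‖ := norm_mul₃_le
      _ ≤ ‖u‖ * H * ‖v‖ := by
        gcongr
        exacts [norm_le_pi_norm u i, hH i j, norm_le_pi_norm v j]
      _ = H * ‖u‖ * ‖v‖ := by ring
  calc ‖toLinearMap₂' S f u v‖ = ‖∑ i, ∑ j, u i * f i j * v j‖ := by
        simp only [toLinearMap₂'_apply, smul_eq_mul, mul_comm, mul_left_comm]
    _ ≤ ∑ _i : ι, ∑ _j : ι, H * ‖u‖ * ‖v‖ :=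
        norm_sum_le_of_le _ fun i _ => norm_sum_le_of_le _ fun j _ => hterm i j
    _ = Fintype.card ι ^ 2 * H * ‖u‖ * ‖v‖ := by
        simp only [Finset.sum_const, Finset.card_univ, nsmul_eq_mul]
        ring

theorem norm_scaledReflection_toQuadraticForm'_le {S ι : Type*} [NormedCommRing S] [Fintype ι]
    [DecidableEq ι] {f : Matrix ι ι S} {H : ℝ} (hH : ∀ i j, ‖f i j‖ ≤ H) (d x : ι → S) :
    ‖scaledReflection f.toQuadraticForm' d x‖ ≤ 3 * Fintype.card ι ^ 2 * H * ‖d‖ ^ 2 * ‖x‖ := by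
  have hbound := norm_toLinearMap₂'_le hH
  have hpolar : ‖polar f.toQuadraticForm' x d‖ ≤ 2 * (Fintype.card ι ^ 2 * H * ‖x‖ * ‖d‖) := by
    rw [toQuadraticForm', LinearMap.BilinMap.polar_toQuadraticMap]
    linarith [norm_add_le (toLinearMap₂' S f x d) (toLinearMap₂' S f d x), hbound x d, hbound d x]
  calc ‖scaledReflection f.toQuadraticForm' d x‖
      ≤ ‖f.toQuadraticForm' d‖ * ‖x‖ + ‖polar f.toQuadraticForm' x d‖ * ‖d‖ :=
        (norm_sub_le _ _).trans (add_le_add (norm_smul_le _ _) (norm_smul_le _ _))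
    _ ≤ (Fintype.card ι ^ 2 * H * ‖d‖ * ‖d‖) * ‖x‖ +
          2 * (Fintype.card ι ^ 2 * H * ‖x‖ * ‖d‖) * ‖d‖ := by
        gcongr
        exact hbound d d
    _ = 3 * Fintype.card ι ^ 2 * H * ‖d‖ ^ 2 * ‖x‖ := by ring

theorem separatingLeft_polarBilin_toQuadraticForm' {ι : Type*} [Fintype ι] [DecidableEq ι]
    [IsDomain R] (h2 : (2 : R) ≠ 0) {f : Matrix ι ι R} (hf : f.IsSymm) (hdet : f.det ≠ 0) :
    f.toQuadraticForm'.polarBilin.SeparatingLeft := by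
  have hpolar (x y : ι → R) :
      polar f.toQuadraticForm' x y = 2 * toLinearMap₂' R f x y := by
    have hcomm : y ⬝ᵥ f *ᵥ x = x ⬝ᵥ f *ᵥ y := by
      rw [dotProduct_mulVec, ← mulVec_transpose, hf, dotProduct_comm]
    rw [toQuadraticForm', LinearMap.BilinMap.polar_toQuadraticMap, toLinearMap₂'_apply',
      toLinearMap₂'_apply', hcomm, two_mul]
  refine fun x hx => LinearMap.separatingLeft_toLinearMap₂'_of_det_ne_zero' hdet x fun y => ?_
  simpa [hpolar, h2] using hx y

theorem toQuadraticForm'_apply_eq_sum {ι : Type*} [Fintype ι] [DecidableEq ι] (f : Matrix ι ι R)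
    (x : ι → R) : f.toQuadraticForm' x = ∑ i, ∑ j, f i j * x i * x j := by
  simp [toQuadraticForm', toLinearMap₂'_apply, mul_comm, mul_left_comm]

end Reflection

section IsotropicPair

open QuadraticMap (polar)

theorem pow_card_mul_le_mul_prod {ι : Type*} [Fintype ι] {a : ι → ℝ} {b : ℝ} (hb : 0 ≤ b)
    (hba : ∀ j, b ≤ a j) (i : ι) : b ^ Fintype.card ι * a i ≤ b * ∏ j, a j := by
  classical
  have hothers : b ^ (Finset.univ.erase i).card ≤ ∏ j ∈ Finset.univ.erase i, a j := by
    rw [← Finset.prod_const]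
    exact Finset.prod_le_prod (fun _ _ => hb) fun j _ => hba j
  have hcard : Fintype.card ι = (Finset.univ.erase i).card + 1 :=
    (Finset.card_erase_add_one (Finset.mem_univ i)).symm
  calc b ^ Fintype.card ι * a i = b * (a i * b ^ (Finset.univ.erase i).card) := by
        rw [hcard]
        ring
    _ ≤ b * (a i * ∏ j ∈ Finset.univ.erase i, a j) := by
        have hi : 0 ≤ a i := hb.trans (hba i)
        gcongr
    _ = b * ∏ j, a j := by rw [Finset.mul_prod_erase _ _ (Finset.mem_univ i)]

theorem norm_mul_norm_scaledReflection_le {S ι : Type*} [NormedCommRing S] [NormMulClass S]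
    [Fintype ι] {Q : QuadraticForm S (ι → S)} {K : ℝ}
    (hK : ∀ d x, ‖scaledReflection Q d x‖ ≤ K * ‖d‖ ^ 2 * ‖x‖) {x : ι → S} (hQx : Q x = 0)
    (hx : x ≠ 0) {k : ι} (hk : ‖x k‖ = ‖x‖) (d : ι → S) :
    ‖x‖ * ‖scaledReflection Q d x‖ ≤ K * ‖pivotElim k x d‖ ^ 2 := by
  refine le_of_mul_le_mul_right ?_ (norm_pos_iff.2 hx)
  calc ‖x‖ * ‖scaledReflection Q d x‖ * ‖x‖ = ‖x k ^ 2 • scaledReflection Q d x‖ := by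
        rw [sq, norm_smul, norm_mul, hk]
        ring
    _ = ‖scaledReflection Q (pivotElim k x d) x‖ := by
        rw [pivotElim_apply, scaledReflection_smul_sub_smul hQx]
    _ ≤ K * ‖pivotElim k x d‖ ^ 2 * ‖x‖ := hK _ _

theorem exists_polar_row_succ_ne_zero {R : Type*} [CommRing R] [IsDomain R] {n : ℕ}
    {Q : QuadraticForm R (Fin (n + 1) → R)} (hQ : Q.polarBilin.SeparatingLeft)
    {D : Matrix (Fin (n + 1)) (Fin (n + 1)) R} (hD : D.det ≠ 0) (hQD : Q (D 0) = 0) :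
    ∃ i : Fin n, polar Q (D 0) (D i.succ) ≠ 0 := by
  by_contra! h
  have hφ : Q.polarBilin (D 0) = 0 := linearMap_eq_zero_of_forall_row_eq_zero hD <|
    Fin.cases (by simp [QuadraticMap.polar_self, hQD]) h
  exact row_ne_zero_of_det_ne_zero hD 0 (hQ _ fun y => by simp [hφ])

variable {n : ℕ} {k : Fin (n + 1)} {D : Matrix (Fin (n + 1)) (Fin (n + 1)) ℤ}

theorem IsPivotReduced.sq_norm_le_mul_sq_norm_pivotElim (hDk : IsPivotReduced k D) (hD : D.det ≠ 0)
    {Λ : Submodule ℤ (Fin (n + 1) → ℤ)} (hDΛ : ∀ j, D j ∈ Λ)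
    {Q : QuadraticForm ℤ (Fin (n + 1) → ℤ)} {K : ℝ} (hK2 : 2 ≤ K)
    (hK : ∀ d x, ‖scaledReflection Q d x‖ ≤ K * ‖d‖ ^ 2 * ‖x‖) (hQD : Q (D 0) = 0)
    (hmin : ∀ v ∈ Λ, v ≠ 0 → Q v = 0 → ‖D 0‖ ≤ ‖v‖) (i : Fin n) :
    ‖D 0‖ ^ 2 ≤ K * ‖pivotElim k (D 0) (D i.succ)‖ ^ 2 := by
  have hind := linearIndependent_pair_rows_of_det_ne_zero hD (Fin.succ_ne_zero i).symm
  have hrow := row_ne_zero_of_det_ne_zero hD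
  by_cases hz : scaledReflection Q (D i.succ) (D 0) = 0
  · have hQd : Q (D i.succ) = 0 := map_eq_zero_of_scaledReflection_eq_zero hind hz
    have hle : ‖D 0‖ ≤ ‖D i.succ‖ := hmin _ (hDΛ _) (hrow _) hQd
    have hw := hDk.norm_mul_norm_le_two_mul_norm_pivotElim hle
    have hpos : 0 < ‖D 0‖ * ‖D i.succ‖ :=
      mul_pos (norm_pos_iff.2 (hrow 0)) (norm_pos_iff.2 (hrow i.succ))
    have hw1 : 1 ≤ ‖pivotElim k (D 0) (D i.succ)‖ :=
      one_le_norm_of_int_vec_ne_zero (norm_pos_iff.1 (by linarith))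
    nlinarith [norm_nonneg (D 0)]
  · have hQz : Q (scaledReflection Q (D i.succ) (D 0)) = 0 := by
      rw [map_scaledReflection, hQD, mul_zero]
    have hle : ‖D 0‖ ≤ ‖scaledReflection Q (D i.succ) (D 0)‖ :=
      hmin _ (scaledReflection_mem Q (hDΛ _) (hDΛ 0)) hz hQz
    calc ‖D 0‖ ^ 2 ≤ ‖D 0‖ * ‖scaledReflection Q (D i.succ) (D 0)‖ := by
          rw [sq]
          gcongr
      _ ≤ K * ‖pivotElim k (D 0) (D i.succ)‖ ^ 2 :=
          norm_mul_norm_scaledReflection_le hK hQD (hrow 0) hDk.norm_pivot _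

theorem IsPivotReduced.mul_sq_norm_pivotElim_le (hDk : IsPivotReduced k D) (h0 : D 0 ≠ 0) {K : ℝ}
    (hK : 0 ≤ K) (hlow : ∀ j : Fin n, ‖D 0‖ ^ 2 ≤ K * ‖pivotElim k (D 0) (D j.succ)‖ ^ 2)
    (i : Fin n) :
    K * ‖pivotElim k (D 0) (D i.succ)‖ ^ 2 ≤ K ^ n * (2 ^ n.choose 2) ^ 2 * ‖D.det‖ ^ 2 := by
  refine le_of_mul_le_mul_left ?_ (pow_pos (norm_pos_iff.2 h0) (2 * n))
  calc ‖D 0‖ ^ (2 * n) * (K * ‖pivotElim k (D 0) (D i.succ)‖ ^ 2)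
      ≤ ‖D 0‖ ^ 2 * ∏ j : Fin n, (K * ‖pivotElim k (D 0) (D j.succ)‖ ^ 2) := by
        simpa [pow_mul] using pow_card_mul_le_mul_prod (sq_nonneg ‖D 0‖) hlow i
    _ = K ^ n * (‖D 0‖ * ∏ j : Fin n, ‖pivotElim k (D 0) (D j.succ)‖) ^ 2 := by
        rw [Finset.prod_mul_distrib, Finset.prod_pow, Finset.prod_const, Finset.card_fin]
        ring
    _ ≤ K ^ n * (2 ^ n.choose 2 * (‖D 0‖ ^ n * ‖D.det‖)) ^ 2 := by
        gcongr K ^ n * ?_ ^ 2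
        exact hDk.norm_mul_prod_le
    _ = ‖D 0‖ ^ (2 * n) * (K ^ n * (2 ^ n.choose 2) ^ 2 * ‖D.det‖ ^ 2) := by ring

theorem exists_isotropic_pair_norm_mul_norm_le {Q : QuadraticForm ℤ (Fin (n + 1) → ℤ)}
    (hQ : Q.polarBilin.SeparatingLeft) {K : ℝ} (hK2 : 2 ≤ K)
    (hK : ∀ d x, ‖scaledReflection Q d x‖ ≤ K * ‖d‖ ^ 2 * ‖x‖)
    {B : Matrix (Fin (n + 1)) (Fin (n + 1)) ℤ} (hB : B.det ≠ 0)
    (hiso : ∃ v ∈ rowLattice B, v ≠ 0 ∧ Q v = 0) :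
    ∃ x ∈ rowLattice B, ∃ y ∈ rowLattice B, LinearIndependent ℤ ![x, y] ∧ Q x = 0 ∧ Q y = 0 ∧
      ‖x‖ * ‖y‖ ≤ K ^ n * (2 ^ n.choose 2) ^ 2 * ‖B.det‖ ^ 2 := by
  have hdiv (g : ℤ) (v : Fin (n + 1) → ℤ) : g • v ≠ 0 ∧ Q (g • v) = 0 → v ≠ 0 ∧ Q v = 0 := by
    rintro ⟨hgv, hQgv⟩
    have hg : g * g ≠ 0 := mul_self_ne_zero.2 (left_ne_zero_of_smul hgv)
    rw [QuadraticMap.map_smul, smul_eq_zero_iff_right hg] at hQgv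
    exact ⟨right_ne_zero_of_smul hgv, hQgv⟩
  obtain ⟨U, k, hU, hDk, ⟨h0, hQx⟩, hmin⟩ := exists_isPivotReduced_forall_norm_le
    (S := {v | v ≠ 0 ∧ Q v = 0}) (fun _ => hasShortBasis_of_det_ne_zero) hB (by simp) hdiv hiso
  set D := U * B
  have hDB : ∀ j, D j ∈ rowLattice B := mul_row_mem_rowLattice U B
  have hD : D.det ≠ 0 := by simpa [D, hU.ne_zero] using hB
  obtain ⟨i, hi⟩ := exists_polar_row_succ_ne_zero hQ hD hQx
  refine ⟨D 0, hDB 0, scaledReflection Q (D i.succ) (D 0),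
    scaledReflection_mem Q (hDB _) (hDB 0),
    linearIndependent_pair_scaledReflection
      (linearIndependent_pair_rows_of_det_ne_zero hD (Fin.succ_ne_zero i).symm) hi, hQx, ?_, ?_⟩
  · rw [map_scaledReflection, hQx, mul_zero]
  · have hlow := hDk.sq_norm_le_mul_sq_norm_pivotElim hD hDB hK2 hK hQx
      fun v hv hv0 hQv => hmin v hv ⟨hv0, hQv⟩
    calc ‖D 0‖ * ‖scaledReflection Q (D i.succ) (D 0)‖
        ≤ K * ‖pivotElim k (D 0) (D i.succ)‖ ^ 2 :=
          norm_mul_norm_scaledReflection_le hK hQx h0 hDk.norm_pivot _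
      _ ≤ K ^ n * (2 ^ n.choose 2) ^ 2 * ‖D.det‖ ^ 2 :=
          hDk.mul_sq_norm_pivotElim_le h0 (by positivity) hlow i
      _ = K ^ n * (2 ^ n.choose 2) ^ 2 * ‖B.det‖ ^ 2 := by
          rw [norm_det_mul_of_isUnit_det hU]

end IsotropicPair

theorem memLattice_iff_mem_rowLattice {N : ℕ} {B : Matrix (Fin N) (Fin N) ℤ} {x : Fin N → ℤ} :
    memLattice B x ↔ x ∈ rowLattice B := by
  simp [memLattice, rowLattice, funext_iff, vecMul, dotProduct, eq_comm]

theorem one_le_of_det_ne_zero_of_forall_norm_le {ι : Type*} [Fintype ι] [DecidableEq ι]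
    [Nonempty ι] {f : Matrix ι ι ℤ} (hf : f.det ≠ 0) {H : ℝ} (hH : ∀ i j, ‖f i j‖ ≤ H) :
    1 ≤ H := by
  obtain ⟨i⟩ := ‹Nonempty ι›
  obtain ⟨j, hj⟩ := Function.ne_iff.1 (row_ne_zero_of_det_ne_zero hf i)
  exact (one_le_norm_of_int_ne_zero hj).trans (hH i j)

theorem exists_pair_of_zeros_norm_mul_norm_le {n : ℕ} {f : Matrix (Fin (n + 1)) (Fin (n + 1)) ℤ}
    (hf : f.IsSymm) (hdet : f.det ≠ 0) {H : ℝ} (hH : ∀ i j, ‖f i j‖ ≤ H)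
    {B : Matrix (Fin (n + 1)) (Fin (n + 1)) ℤ} (hB : B.det ≠ 0)
    (hiso : ∃ v ∈ rowLattice B, v ≠ 0 ∧ f.toQuadraticForm' v = 0) :
    ∃ x ∈ rowLattice B, ∃ y ∈ rowLattice B, LinearIndependent ℤ ![x, y] ∧
      f.toQuadraticForm' x = 0 ∧ f.toQuadraticForm' y = 0 ∧
      ‖x‖ * ‖y‖ ≤ (3 * (n + 1) ^ 2) ^ n * (2 ^ n.choose 2) ^ 2 * H ^ n * ‖B.det‖ ^ 2 := by
  have hK2 : (2 : ℝ) ≤ 3 * (n + 1) ^ 2 * H := by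
    nlinarith [one_le_of_det_ne_zero_of_forall_norm_le hdet hH, (n.cast_nonneg : (0 : ℝ) ≤ n)]
  have hK (d x : Fin (n + 1) → ℤ) : ‖scaledReflection f.toQuadraticForm' d x‖ ≤
      3 * (n + 1) ^ 2 * H * ‖d‖ ^ 2 * ‖x‖ := by
    simpa using norm_scaledReflection_toQuadraticForm'_le hH d x
  obtain ⟨x, hx, y, hy, hxy, hQx, hQy, hle⟩ := exists_isotropic_pair_norm_mul_norm_le
    (separatingLeft_polarBilin_toQuadraticForm' two_ne_zero hf hdet) hK2 hK hB hiso
  exact ⟨x, hx, y, hy, hxy, hQx, hQy, hle.trans_eq (by rw [mul_pow _ H]; ring)⟩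

/-- **Davenport–Chalk.** For every `N ≥ 2` there is a constant `C_N` such that: if `F` is a
nonsingular integral quadratic form in `N` variables and `Λ ⊆ ℤ^N` is a full-rank sublattice
containing a nonzero zero of `F`, then there exist linearly independent `x, y ∈ Λ` with
`F(x) = F(y) = 0` and `|x| · |y| ≤ C_N · |F|^(N-1) · det(Λ)²`. -/
theorem davenport_pair_of_zeros (N : ℕ) (hN : 2 ≤ N) :
    ∃ C : ℝ, 0 < C ∧
      ∀ (f : Fin N → Fin N → ℤ), (∀ i j, f i j = f j i) →
      (Matrix.of f).det ≠ 0 →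
      ∀ B : Matrix (Fin N) (Fin N) ℤ, B.det ≠ 0 →
      (∃ x : Fin N → ℤ, memLattice B x ∧ x ≠ 0 ∧ ∑ i, ∑ j, f i j * x i * x j = 0) →
      ∃ x y : Fin N → ℤ, memLattice B x ∧ memLattice B y ∧
        LinearIndependent ℤ ![x, y] ∧
        (∑ i, ∑ j, f i j * x i * x j = 0) ∧ (∑ i, ∑ j, f i j * y i * y j = 0) ∧
        (supNorm x : ℝ) * (supNorm y : ℝ) ≤
          C * ((Finset.univ.sup fun p : Fin N × Fin N => (f p.1 p.2).natAbs : ℕ) : ℝ) ^ (N - 1) *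
            (B.det : ℝ) ^ 2 := by
  obtain ⟨n, rfl⟩ : ∃ n, N = n + 1 := ⟨N - 1, by omega⟩
  refine ⟨(3 * (n + 1) ^ 2) ^ n * (2 ^ n.choose 2) ^ 2, by positivity, ?_⟩
  intro f hsymm hdet B hB hzero
  simp only [memLattice_iff_mem_rowLattice, supNorm, natCast_sup_natAbs] at hzero ⊢
  have hQ (v : Fin (n + 1) → ℤ) : ∑ i, ∑ j, f i j * v i * v j = (of f).toQuadraticForm' v :=
    (toQuadraticForm'_apply_eq_sum (of f) v).symm
  simp only [hQ] at hzero ⊢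
  obtain ⟨x, hx, y, hy, hxy, hQx, hQy, hle⟩ := exists_pair_of_zeros_norm_mul_norm_le
    (IsSymm.ext fun i j => hsymm j i) hdet
    (fun i j => norm_le_pi_norm (fun p : Fin (n + 1) × Fin (n + 1) => f p.1 p.2) (i, j)) hB hzero
  refine ⟨x, y, hx, hy, hxy, hQx, hQy, ?_⟩
  rwa [Int.norm_eq_abs, sq_abs] at hle
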